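/- Let q : [−1,1] → ℝ be bounded and measurable. For every ν₀ > 0 there exist ε₀ > 0 and a constant C₀ > 0 depending only on ν₀ and ‖q‖_{L^∞} such that for all ε ∈ (0, ε₀) and all u, v ∈ H¹([−1,1]) one has ∫_{−1}^{1} ( u'(r) v(r) − u(r) v'(r) ) q(r) dr ≤ ν₀ ( Q₁(u) + Q₁(v) ) + C₀ ∫_{−1}^{1} ( u(r)² + v(r)² ) dr. -/

import Mathlib

open Filter MeasureTheory

lemma s19_ac (g : ℝ → ℝ) (c : ℝ) (hg : IntervalIntegrable g volume (-1) 1) :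
    AbsolutelyContinuousOnInterval (fun x => c + ∫ t in (-1:ℝ)..x, g t) (-1) 1 := by
  have h1 := hg.absolutelyContinuousOnInterval_intervalIntegral (c := -1) (by simp)
  have h2 : AbsolutelyContinuousOnInterval (fun _ : ℝ => c) (-1) 1 :=
    ((LipschitzWith.const c).lipschitzOnWith (s := Set.uIcc (-1:ℝ) 1)).absolutelyContinuousOnInterval
  exact h2.add h1

lemma s19_cont (u g : ℝ → ℝ) (hg : IntervalIntegrable g volume (-1) 1)
    (hu : ∀ x ∈ Set.Icc (-1:ℝ) 1, u x = u (-1) + ∫ t in (-1:ℝ)..x, g t) :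
    ContinuousOn u (Set.uIcc (-1:ℝ) 1) := by
  refine (s19_ac g (u (-1)) hg).continuousOn.congr ?_
  intro x hx
  rw [Set.uIcc_of_le (by norm_num)] at hx
  exact hu x hx

lemma s19_ibp (m m' u g : ℝ → ℝ) (hm : ∀ x, HasDerivAt m (m' x) x) (hm' : Continuous m')
    (hg : IntervalIntegrable g volume (-1) 1)
    (hu : ∀ x ∈ Set.Icc (-1:ℝ) 1, u x = u (-1) + ∫ t in (-1:ℝ)..x, g t) :
    ∫ r in (-1:ℝ)..1, (m' r * (u r) ^ 2 + m r * (2 * u r * g r))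
      = m 1 * (u 1) ^ 2 - m (-1) * (u (-1)) ^ 2 := by
  set U : ℝ → ℝ := fun x => u (-1) + ∫ t in (-1:ℝ)..x, g t with hU
  have acU : AbsolutelyContinuousOnInterval U (-1) 1 := s19_ac g _ hg
  have hmi : ∀ x, m x = m (-1) + ∫ t in (-1:ℝ)..x, m' t := by
    intro x
    rw [intervalIntegral.integral_eq_sub_of_hasDerivAt (fun y _ => hm y)
      (hm'.intervalIntegrable _ _)]
    ring
  have acm : AbsolutelyContinuousOnInterval m (-1) 1 := by
    have := s19_ac m' (m (-1)) (hm'.intervalIntegrable _ _)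
    rwa [← funext hmi] at this
  have key := acm.integral_deriv_mul_eq_sub (acU.fun_mul acU)
  have e1 : U 1 = u 1 := (hu 1 (by norm_num)).symm
  have e2 : U (-1) = u (-1) := by simp [hU]
  rw [e1, e2] at key
  rw [pow_two, pow_two, ← key]
  apply intervalIntegral.integral_congr_ae
  filter_upwards [hg.ae_hasDerivAt_integral] with x hx hx'
  have hx2 : x ∈ Set.uIcc (-1:ℝ) 1 := Set.uIoc_subset_uIcc hx'
  have hd : HasDerivAt U (g x) x := (hx hx2 (-1) (by simp)).const_add _
  have hd2 := (hd.fun_mul hd).deriv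
  have hux : u x = U x := hu x (by rwa [Set.uIcc_of_le (by norm_num)] at hx2)
  rw [hd2, (hm x).deriv, hux]
  ring

lemma s19_intg (u g h : ℝ → ℝ) (hg : IntervalIntegrable g volume (-1) 1)
    (hg2 : IntervalIntegrable (fun r => (g r) ^ 2) volume (-1) 1)
    (hu : ContinuousOn u (Set.uIcc (-1:ℝ) 1)) (hc : Continuous h) :
    IntervalIntegrable (fun r => (g r - h r * u r) ^ 2) volume (-1) 1 := by
  have h1 : IntervalIntegrable (fun r => g r * (2 * h r * u r)) volume (-1) 1 :=
    hg.mul_continuousOn (by fun_prop)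
  have h2 : IntervalIntegrable (fun r => (h r * u r) ^ 2) volume (-1) 1 :=
    ContinuousOn.intervalIntegrable (by fun_prop)
  refine ((hg2.sub h1).add h2).congr ?_
  intro r _
  simp only [Pi.add_apply, Pi.sub_apply]
  ring

lemma s19_lower (a : ℝ) (ha : 0 < a) (θ h F u g : ℝ → ℝ)
    (hθ : ∀ x, HasDerivAt θ (h x * θ x) x) (hh : ∀ x, HasDerivAt h (F x - h x ^ 2) x)
    (hF : Continuous F) (hθa : ∀ x, a < θ x) (h1 : 0 ≤ h 1) (h0 : 0 ≤ h (-1))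
    (hk : h (-1) * θ (-1) ^ 2 ≤ a ^ 2 / 2)
    (hg : IntervalIntegrable g volume (-1) 1)
    (hg2 : IntervalIntegrable (fun r => (g r) ^ 2) volume (-1) 1)
    (hu : ∀ x ∈ Set.Icc (-1:ℝ) 1, u x = u (-1) + ∫ t in (-1:ℝ)..x, g t) :
    ∫ r in (-1:ℝ)..1, (1 / 2 * (g r - h r * u r) ^ 2 - 3 / 4 * (u r) ^ 2) ≤
      ∫ r in (-1:ℝ)..1, ((g r) ^ 2 + F r * (u r) ^ 2) := by
  have hpos : ∀ x, 0 < θ x := fun x => ha.trans (hθa x)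
  have hne : ∀ x, θ x ≠ 0 := fun x => (hpos x).ne'
  have ch : Continuous h := continuous_iff_continuousAt.2 fun x => (hh x).continuousAt
  have cθ : Continuous θ := continuous_iff_continuousAt.2 fun x => (hθ x).continuousAt
  have cu := s19_cont u g hg hu
  set κ := h (-1) * θ (-1) ^ 2 with hκ
  have κ0 : 0 ≤ κ := by positivity
  set m : ℝ → ℝ := fun r => h r - κ * ((1 - r) / 2) / θ r ^ 2 with hm
  set m' : ℝ → ℝ := fun r => F r - h r ^ 2 + κ * (1 / 2 + 2 * ((1 - r) / 2) * h r) / θ r ^ 2 with hm'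
  have dm : ∀ x, HasDerivAt m (m' x) x := by
    intro x
    have d1 : HasDerivAt (fun r : ℝ => κ * ((1 - r) / 2)) (κ * (-1 / 2)) x :=
      ((((hasDerivAt_id x).const_sub 1).div_const 2).const_mul κ)
    have d2 := (hh x).fun_sub (d1.fun_div ((hθ x).fun_pow 2) (pow_ne_zero 2 (hne x)))
    refine d2.congr_deriv ?_
    have := hne x
    simp only [hm']
    field_simp
    push_cast
    ring
  have cm' : Continuous m' := by
    have : ∀ x, θ x ^ 2 ≠ 0 := fun x => pow_ne_zero 2 (hne x)
    simp only [hm']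
    fun_prop (disch := assumption)
  have cm : Continuous m := continuous_iff_continuousAt.2 fun x => (dm x).continuousAt
  have key := s19_ibp m m' u g dm cm' hg hu
  have m1 : m 1 = h 1 := by simp [hm]
  have m0 : m (-1) = 0 := by
    have := hne (-1)
    simp only [hm, hκ]
    field_simp
    ring
  have i1 : IntervalIntegrable (fun r => m' r * (u r) ^ 2 + m r * (2 * u r * g r)) volume (-1) 1 := by
    have a1 : IntervalIntegrable (fun r => m' r * (u r) ^ 2) volume (-1) 1 :=
      ContinuousOn.intervalIntegrable (by fun_prop)
    have a2 : IntervalIntegrable (fun r => (m r * (2 * u r)) * g r) volume (-1) 1 :=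
      hg.continuousOn_mul (by fun_prop)
    refine (a1.add a2).congr ?_
    intro r _
    simp only [Pi.add_apply]
    ring
  have i2 : IntervalIntegrable (fun r => 1 / 2 * (g r - h r * u r) ^ 2 - 3 / 4 * (u r) ^ 2)
      volume (-1) 1 :=
    ((s19_intg u g h hg hg2 cu ch).const_mul _).sub
      (ContinuousOn.intervalIntegrable (by fun_prop))
  have i3 : IntervalIntegrable (fun r => (g r) ^ 2 + F r * (u r) ^ 2) volume (-1) 1 :=
    hg2.add (ContinuousOn.intervalIntegrable (by fun_prop))
  have mono : ∫ r in (-1:ℝ)..1, ((1 / 2 * (g r - h r * u r) ^ 2 - 3 / 4 * (u r) ^ 2)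
      + (m' r * (u r) ^ 2 + m r * (2 * u r * g r))) ≤
      ∫ r in (-1:ℝ)..1, ((g r) ^ 2 + F r * (u r) ^ 2) := by
    apply intervalIntegral.integral_mono_on (by norm_num) (i2.add i1) i3
    intro r hr
    set c := κ / θ r ^ 2 with hc
    set k := (1 - r) / 2 with hkk
    have c0 : 0 ≤ c := by positivity
    have c1 : c ≤ 1 / 2 := by
      rw [hc, div_le_iff₀ (by have := hpos r; positivity)]
      nlinarith [hθa r]
    have k0 : 0 ≤ k := by rw [hkk]; linarith [hr.2]
    have k1 : k ≤ 1 := by rw [hkk]; linarith [hr.1]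
    have em : m r = h r - c * k := by simp only [hm, hc]; ring
    have em' : m' r = F r - h r ^ 2 + c * (1 / 2 + 2 * k * h r) := by simp only [hm', hc]; ring
    rw [em, em']
    set p := g r - h r * u r with hp
    have eg : g r = p + h r * u r := by rw [hp]; ring
    rw [eg]
    have ck0 : 0 ≤ c * k := by positivity
    have ck1 : c * k ≤ 1 / 2 := by nlinarith
    nlinarith [mul_nonneg ck0 (sq_nonneg (u r + p)), mul_nonneg (sub_nonneg.2 ck1) (sq_nonneg (u r)),
      mul_nonneg (sub_nonneg.2 ck1) (sq_nonneg p), mul_nonneg (sub_nonneg.2 c1) (sq_nonneg (u r))]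
  rw [intervalIntegral.integral_add i2 i1, key, m1, m0] at mono
  nlinarith [mul_nonneg h1 (sq_nonneg (u 1))]

lemma s19_decay (a b : ℝ) (ha : 0 < a) (hab : a < b) (ρ₀ : ℝ → ℝ)
    (hd : ∀ z, HasDerivAt ρ₀ (Real.sqrt 2 / 2 * ((ρ₀ z) ^ 2 - a ^ 2) * (b ^ 2 - (ρ₀ z) ^ 2)) z)
    (hbnd : ∀ z, a < ρ₀ z ∧ ρ₀ z < b)
    (hbot : Filter.Tendsto ρ₀ Filter.atBot (nhds a)) (η : ℝ) (hη : 0 < η) :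
    ∃ ε₀ > (0:ℝ), ∀ ε ∈ Set.Ioo (0:ℝ) ε₀,
      Real.sqrt 2 / 2 * ((ρ₀ (-1 / ε)) ^ 2 - a ^ 2) * (b ^ 2 - (ρ₀ (-1 / ε)) ^ 2) / ε ≤ η := by
  have hs : 0 < Real.sqrt 2 / 2 := by positivity
  have hpos : ∀ z, 0 < Real.sqrt 2 / 2 * ((ρ₀ z) ^ 2 - a ^ 2) * (b ^ 2 - (ρ₀ z) ^ 2) := by
    intro z
    obtain ⟨h1, h2⟩ := hbnd z
    have : 0 < (ρ₀ z) ^ 2 - a ^ 2 := by nlinarith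
    have : 0 < b ^ 2 - (ρ₀ z) ^ 2 := by nlinarith
    positivity
  have hmono : StrictMono ρ₀ := strictMono_of_deriv_pos fun z => by rw [(hd z).deriv]; exact hpos z
  have e1 : ∀ᶠ z in atBot, ρ₀ z < a + η / 2 := hbot.eventually_lt_const (by linarith)
  have e2 : ∀ᶠ z in atBot, (ρ₀ z) ^ 2 < (a ^ 2 + b ^ 2) / 2 :=
    (hbot.pow 2).eventually_lt_const (by nlinarith)
  obtain ⟨N, hN⟩ := eventually_atBot.1 (e1.and e2)
  refine ⟨1 / (2 * (|N| + 1)), by positivity, ?_⟩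
  rintro ε ⟨hε, hε'⟩
  have hz : -1 / (2 * ε) ≤ N := by
    rw [lt_div_iff₀ (by positivity)] at hε'
    rw [div_le_iff₀ (by positivity)]
    nlinarith [neg_abs_le N]
  obtain ⟨f1, f2⟩ := hN _ hz
  have hlt : -1 / ε < -1 / (2 * ε) := by
    rw [div_lt_div_iff₀ hε (by positivity)]
    linarith
  obtain ⟨ξ, hξ, hξe⟩ := exists_hasDerivAt_eq_slope ρ₀ _ hlt
    (fun x _ => (hd x).continuousAt.continuousWithinAt) (fun x _ => hd x)
  have hw : -1 / (2 * ε) - -1 / ε = 1 / (2 * ε) := by field_simp; norm_num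
  rw [hw] at hξe
  have g1 : ρ₀ (-1 / ε) < ρ₀ ξ := hmono hξ.1
  have g2 : ρ₀ ξ < ρ₀ (-1 / (2 * ε)) := hmono hξ.2
  have ge : Real.sqrt 2 / 2 * ((ρ₀ (-1 / ε)) ^ 2 - a ^ 2) * (b ^ 2 - (ρ₀ (-1 / ε)) ^ 2) ≤
      Real.sqrt 2 / 2 * ((ρ₀ ξ) ^ 2 - a ^ 2) * (b ^ 2 - (ρ₀ ξ) ^ 2) := by
    rw [mul_assoc, mul_assoc]
    apply mul_le_mul_of_nonneg_left _ hs.le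
    have b1 := (hbnd (-1 / ε)).1
    have q1 : (ρ₀ (-1 / ε)) ^ 2 < (ρ₀ ξ) ^ 2 := by nlinarith
    have q2 : (ρ₀ ξ) ^ 2 < (ρ₀ (-1 / (2 * ε))) ^ 2 := by nlinarith
    nlinarith
  have b1 := (hbnd (-1 / ε)).1
  calc _ ≤ (ρ₀ (-1 / (2 * ε)) - ρ₀ (-1 / ε)) / (1 / (2 * ε)) / ε := by
        rw [← hξe]; gcongr
    _ = 2 * (ρ₀ (-1 / (2 * ε)) - ρ₀ (-1 / ε)) := by field_simp
    _ ≤ η := by linarith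

/-- `f_B(ρ) = (ρ² − a²)(ρ² − b²)(2ρ² − a² − b²)`. -/
noncomputable def fB (a b ρ : ℝ) : ℝ :=
  (ρ ^ 2 - a ^ 2) * (ρ ^ 2 - b ^ 2) * (2 * ρ ^ 2 - a ^ 2 - b ^ 2)

/-- The quadratic form `Q₁(u) = ∫_{−1}^{1} (u'(r)² + ε⁻² f_B(ρ₀(r/ε)) u(r)²) dr`, written for
a function `u` with (weak) derivative `g`. -/
noncomputable def Q1 (a b ε : ℝ) (ρ₀ u g : ℝ → ℝ) : ℝ :=
  ∫ r in (-1:ℝ)..1, ((g r) ^ 2 + (ε ^ 2)⁻¹ * fB a b (ρ₀ (r / ε)) * (u r) ^ 2)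

/-- (Cross-term estimate.) For every `ν₀ > 0` and every bound `M > 0` on
`‖q‖_{L^∞}`, there exist `ε₀ > 0` and `C₀ > 0` (depending only on `ν₀` and `M`) such that
for every bounded measurable `q : [−1,1] → ℝ` with `|q| ≤ M`, all `ε ∈ (0, ε₀)` and all
`u, v ∈ H¹([−1,1])` (with derivatives `gu, gv`):
`∫_{−1}^{1} (u'v − uv') q ≤ ν₀ (Q₁(u) + Q₁(v)) + C₀ ∫_{−1}^{1} (u² + v²)`. -/
theorem statement19 (a b α : ℝ) (ha : 0 < a) (hab : a < b)
    (hα : 0 < α)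
    (hα' : α < min (Real.sqrt 2 * (b ^ 2 - a ^ 2) * a) (Real.sqrt 2 * (b ^ 2 - a ^ 2) * b))
    (ρ₀ : ℝ → ℝ) (hreg : ContDiff ℝ 1 ρ₀)
    (hderiv : ∀ z, deriv ρ₀ z =
      Real.sqrt 2 / 2 * ((ρ₀ z) ^ 2 - a ^ 2) * (b ^ 2 - (ρ₀ z) ^ 2))
    (hbnd : ∀ z, a < ρ₀ z ∧ ρ₀ z < b)
    (hbot : Filter.Tendsto ρ₀ Filter.atBot (nhds a))
    (htop : Filter.Tendsto ρ₀ Filter.atTop (nhds b))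
    (hnorm : b * Real.log ((ρ₀ 0 - a) / (ρ₀ 0 + a))
      - a * Real.log ((b - ρ₀ 0) / (b + ρ₀ 0)) = 0)
    (ν₀ M : ℝ) (hν₀ : 0 < ν₀) (hM : 0 < M) :
    ∃ ε₀ > (0:ℝ), ∃ C₀ > (0:ℝ), ∀ q : ℝ → ℝ, Measurable q →
      (∀ r ∈ Set.Icc (-1:ℝ) 1, |q r| ≤ M) →
      ∀ ε ∈ Set.Ioo (0:ℝ) ε₀, ∀ u gu v gv : ℝ → ℝ,
      IntervalIntegrable gu volume (-1) 1 →
      IntervalIntegrable (fun r => (gu r) ^ 2) volume (-1) 1 →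
      (∀ x ∈ Set.Icc (-1:ℝ) 1, u x = u (-1) + ∫ t in (-1:ℝ)..x, gu t) →
      IntervalIntegrable gv volume (-1) 1 →
      IntervalIntegrable (fun r => (gv r) ^ 2) volume (-1) 1 →
      (∀ x ∈ Set.Icc (-1:ℝ) 1, v x = v (-1) + ∫ t in (-1:ℝ)..x, gv t) →
      (∫ r in (-1:ℝ)..1, (gu r * v r - u r * gv r) * q r) ≤
        ν₀ * (Q1 a b ε ρ₀ u gu + Q1 a b ε ρ₀ v gv)
          + C₀ * ∫ r in (-1:ℝ)..1, ((u r) ^ 2 + (v r) ^ 2) := by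
  have hd : ∀ z, HasDerivAt ρ₀
      (Real.sqrt 2 / 2 * ((ρ₀ z) ^ 2 - a ^ 2) * (b ^ 2 - (ρ₀ z) ^ 2)) z := by
    intro z
    rw [← hderiv z]
    exact ((hreg.differentiable (by norm_num)) z).hasDerivAt
  have hb : 0 < b := ha.trans hab
  obtain ⟨ε₀, hε₀, hdec⟩ := s19_decay a b ha hab ρ₀ hd hbnd hbot (a ^ 2 / (2 * b)) (by positivity)
  refine ⟨ε₀, hε₀, M ^ 2 / (2 * ν₀) + 3 / 4 * ν₀, by positivity, ?_⟩
  intro q hq hqM ε hε u gu v gv hgu hgu2 hu hgv hgv2 hv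
  have hε0 : 0 < ε := hε.1
  have hdec := hdec ε hε
  set θ : ℝ → ℝ := fun r => ρ₀ (r / ε) with hθ
  set P : ℝ → ℝ := fun x => Real.sqrt 2 / 2 * (x ^ 2 - a ^ 2) * (b ^ 2 - x ^ 2) with hP
  set h : ℝ → ℝ := fun r => P (θ r) / ε / θ r with hh
  set F : ℝ → ℝ := fun r => (ε ^ 2)⁻¹ * fB a b (ρ₀ (r / ε)) with hF
  have hθa : ∀ x, a < θ x := fun x => (hbnd _).1
  have hθb : ∀ x, θ x < b := fun x => (hbnd _).2
  have hθ0 : ∀ x, θ x ≠ 0 := fun x => (ha.trans (hθa x)).ne'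
  have hPpos : ∀ x, 0 < P (θ x) := by
    intro x
    have h1 := hθa x
    have h2 := hθb x
    have : 0 < (θ x) ^ 2 - a ^ 2 := by nlinarith
    have : 0 < b ^ 2 - (θ x) ^ 2 := by nlinarith
    simp only [hP]
    positivity
  have hhpos : ∀ x, 0 < h x := fun x => by
    have := hPpos x
    have := ha.trans (hθa x)
    simp only [hh]
    positivity
  have dθ' : ∀ x, HasDerivAt θ (P (θ x) / ε) x := by
    intro x
    have := (hd (x / ε)).comp x ((hasDerivAt_id x).div_const ε)
    refine this.congr_deriv ?_
    simp only [hP, hθ]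
    ring
  have dθ : ∀ x, HasDerivAt θ (h x * θ x) x := by
    intro x
    refine (dθ' x).congr_deriv ?_
    have := hθ0 x
    simp only [hh]
    field_simp
  have dh : ∀ x, HasDerivAt h (F x - h x ^ 2) x := by
    intro x
    have d1 := ((((dθ' x).fun_pow 2).sub_const (a ^ 2)).const_mul (Real.sqrt 2 / 2)).fun_mul
      (((dθ' x).fun_pow 2).const_sub (b ^ 2))
    have d2 := (d1.div_const ε).fun_div (dθ' x) (hθ0 x)
    refine d2.congr_deriv ?_
    have h0 := hθ0 x
    have h2 : Real.sqrt 2 ^ 2 = 2 := Real.sq_sqrt (by norm_num)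
    have eF : F x = (ε ^ 2)⁻¹ * fB a b (θ x) := rfl
    rw [eF]
    simp only [hh, hP, fB]
    generalize θ x = t at *
    field_simp
    push_cast
    ring_nf
    simp only [h2]
    ring
  have cθ : Continuous θ := continuous_iff_continuousAt.2 fun x => (dθ x).continuousAt
  have ch : Continuous h := continuous_iff_continuousAt.2 fun x => (dh x).continuousAt
  have cF : Continuous F := by
    have : F = fun r => (ε ^ 2)⁻¹ * fB a b (θ r) := rfl
    rw [this]
    unfold fB
    fun_prop
  have hk : h (-1) * θ (-1) ^ 2 ≤ a ^ 2 / 2 := by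
    have e : h (-1) * θ (-1) ^ 2 = P (θ (-1)) / ε * θ (-1) := by
      have := hθ0 (-1)
      simp only [hh]
      field_simp
    have hd' : P (θ (-1)) / ε ≤ a ^ 2 / (2 * b) := hdec
    rw [e]
    calc _ ≤ a ^ 2 / (2 * b) * b := by
          apply mul_le_mul hd' (hθb _).le (ha.trans (hθa _)).le (by positivity)
      _ = a ^ 2 / 2 := by field_simp
  have Lu := s19_lower a ha θ h F u gu dθ dh cF hθa (hhpos 1).le (hhpos (-1)).le hk hgu hgu2 hu
  have Lv := s19_lower a ha θ h F v gv dθ dh cF hθa (hhpos 1).le (hhpos (-1)).le hk hgv hgv2 hv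
  have cu := s19_cont u gu hgu hu
  have cv := s19_cont v gv hgv hv
  have iu : IntervalIntegrable (fun r => 1 / 2 * (gu r - h r * u r) ^ 2 - 3 / 4 * (u r) ^ 2)
      volume (-1) 1 :=
    ((s19_intg u gu h hgu hgu2 cu ch).const_mul _).sub
      (ContinuousOn.intervalIntegrable (by fun_prop))
  have iv : IntervalIntegrable (fun r => 1 / 2 * (gv r - h r * v r) ^ 2 - 3 / 4 * (v r) ^ 2)
      volume (-1) 1 :=
    ((s19_intg v gv h hgv hgv2 cv ch).const_mul _).sub
      (ContinuousOn.intervalIntegrable (by fun_prop))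
  have iuv : IntervalIntegrable (fun r => (u r) ^ 2 + (v r) ^ 2) volume (-1) 1 :=
    ContinuousOn.intervalIntegrable (by fun_prop)
  have il : IntervalIntegrable (fun r => (gu r * v r - u r * gv r) * q r) volume (-1) 1 := by
    have a1 : IntervalIntegrable (fun r => gu r * v r - u r * gv r) volume (-1) 1 :=
      (hgu.mul_continuousOn cv).sub (hgv.continuousOn_mul cu)
    rw [intervalIntegrable_iff_integrableOn_Ioc_of_le (by norm_num)] at a1 ⊢
    refine Integrable.mul_bdd (c := M) a1 hq.aestronglyMeasurable ?_
    filter_upwards [ae_restrict_mem measurableSet_Ioc] with r hr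
    exact hqM r ⟨hr.1.le, hr.2⟩
  have main : ∫ r in (-1:ℝ)..1, (gu r * v r - u r * gv r) * q r ≤
      ∫ r in (-1:ℝ)..1, ((ν₀ * ((1 / 2 * (gu r - h r * u r) ^ 2 - 3 / 4 * (u r) ^ 2)
        + (1 / 2 * (gv r - h r * v r) ^ 2 - 3 / 4 * (v r) ^ 2)))
        + (M ^ 2 / (2 * ν₀) + 3 / 4 * ν₀) * ((u r) ^ 2 + (v r) ^ 2)) := by
    apply intervalIntegral.integral_mono_on (by norm_num) il
      (((iu.add iv).const_mul ν₀).add (iuv.const_mul _))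
    intro r hr
    have aux : ∀ p w s : ℝ, |s| ≤ M → p * w * s ≤ ν₀ / 2 * p ^ 2 + M ^ 2 / (2 * ν₀) * w ^ 2 := by
      intro p w s hs
      have e : ν₀ / 2 * p ^ 2 + M ^ 2 / (2 * ν₀) * w ^ 2 - p * w * s
          = ((ν₀ * p - w * s) ^ 2 + (M ^ 2 - s ^ 2) * w ^ 2) / (2 * ν₀) := by
        field_simp
        ring
      have hs2 : 0 ≤ M ^ 2 - s ^ 2 := by
        have := sq_le_sq' (abs_le.1 hs).1 (abs_le.1 hs).2
        linarith
      have : 0 ≤ ((ν₀ * p - w * s) ^ 2 + (M ^ 2 - s ^ 2) * w ^ 2) / (2 * ν₀) := by positivity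
      linarith
    have A := aux (gu r - h r * u r) (v r) (q r) (hqM r hr)
    have B := aux (gv r - h r * v r) (u r) (-q r) (by rw [abs_neg]; exact hqM r hr)
    have e : (gu r * v r - u r * gv r) * q r = (gu r - h r * u r) * v r * q r
        + (gv r - h r * v r) * u r * (-q r) := by ring
    rw [e]
    linarith
  rw [intervalIntegral.integral_add ((iu.add iv).const_mul ν₀) (iuv.const_mul _),
    intervalIntegral.integral_const_mul, intervalIntegral.integral_const_mul,
    intervalIntegral.integral_add iu iv] at main
  have Lu' : _ ≤ Q1 a b ε ρ₀ u gu := Lu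
  have Lv' : _ ≤ Q1 a b ε ρ₀ v gv := Lv
  have := mul_le_mul_of_nonneg_left (add_le_add Lu' Lv') hν₀.le
  linarith
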